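/- Let p be a prime and G = ⊕_{j=1}^{t} C_{p^{e_j}} a nontrivial finite abelian p-group, and set K_1^*(G) = Σ_{j=1}^{t} (p^{e_j} − 1)/(p^{e_j} − p^{e_j−1}). If S is a UFIM over G∖{0} whose irreducible factorization has m parts and m ≤ K_1^*(G), then k(S) ≤ K_1^*(G). -/

import Mathlib

open Finset

/-- `S(I)` is minimal zero-sum: nonempty, zero-sum, and no proper nonempty
subfamily is zero-sum. -/
def IsMinZeroSum {G : Type*} [AddCommGroup G] {ℓ : ℕ} (g : Fin ℓ → G)
    (I : Finset (Fin ℓ)) : Prop :=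
  I.Nonempty ∧ ∑ i ∈ I, g i = 0 ∧ ∀ J ⊂ I, J.Nonempty → ∑ i ∈ J, g i ≠ 0

/-- `P` is an irreducible factorization of the indexed multiset `g`: a partition
of the index set all of whose parts are minimal zero-sum. -/
def IsFactorization {G : Type*} [AddCommGroup G] {ℓ : ℕ} (g : Fin ℓ → G)
    (P : Finpartition (Finset.univ : Finset (Fin ℓ))) : Prop :=
  ∀ I ∈ P.parts, IsMinZeroSum g I

/-- `g` is a unique factorization indexed multiset (UFIM) over `G∖{0}`:
all elements are nonzero and there is exactly one irreducible factorization. -/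
def IsUFIM {G : Type*} [AddCommGroup G] {ℓ : ℕ} (g : Fin ℓ → G) : Prop :=
  (∀ i, g i ≠ 0) ∧
  ∃! P : Finpartition (Finset.univ : Finset (Fin ℓ)), IsFactorization g P

/-- The cross number `k(S) = ∑ 1/ord(g_i)`. -/
noncomputable def crossNum {G : Type*} [AddCommGroup G] {ℓ : ℕ} (g : Fin ℓ → G) : ℝ :=
  ∑ i, (1 : ℝ) / (addOrderOf (g i) : ℝ)

/-- `K₁(G)`: the maximal cross number of a UFIM over `G∖{0}`. -/
noncomputable def K1 (G : Type*) [AddCommGroup G] : ℝ :=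
  sSup {x : ℝ | ∃ (ℓ : ℕ) (g : Fin ℓ → G), IsUFIM g ∧ crossNum g = x}

/-- `N₁(G)`: the maximal length of a UFIM over `G∖{0}`. -/
noncomputable def N1 (G : Type*) [AddCommGroup G] : ℕ :=
  sSup {n : ℕ | ∃ g : Fin n → G, IsUFIM g}

/-- `K(G)`: the maximal cross number of a minimal zero-sum indexed multiset over `G∖{0}`. -/
noncomputable def Kcross (G : Type*) [AddCommGroup G] : ℝ :=
  sSup {x : ℝ | ∃ (ℓ : ℕ) (g : Fin ℓ → G), (∀ i, g i ≠ 0) ∧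
    IsMinZeroSum g Finset.univ ∧ crossNum g = x}

/-- `g` is zero-sum free: no nonempty subfamily is zero-sum. -/
def IsZeroSumFree {G : Type*} [AddCommGroup G] {ℓ : ℕ} (g : Fin ℓ → G) : Prop :=
  ∀ I : Finset (Fin ℓ), I.Nonempty → ∑ i ∈ I, g i ≠ 0

/-- The little cross number `k(G)`: the maximal cross number of a zero-sum free
indexed multiset over `G∖{0}`. -/
noncomputable def littleCross (G : Type*) [AddCommGroup G] : ℝ :=
  sSup {x : ℝ | ∃ (ℓ : ℕ) (g : Fin ℓ → G), (∀ i, g i ≠ 0) ∧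
    IsZeroSumFree g ∧ crossNum g = x}

/-!
Every minimal zero-sum subfamily of a UFIM is one of its `m` factors, so deleting one index from
each factor leaves a zero-sum free family. The deleted elements have order at least `p`, so they
contribute at most `m / p ≤ K₁*(G) / p` to the cross number.

The remaining `g i` are bounded in the group algebra `𝔽_p[G]`. Give `1 - X^b` weight `1 / p ^ e j`
for `b` the generator of the `j`-th summand. The Frobenius identity
`(1 - X^b) ^ p ^ n = 1 - X^{p ^ n b}` shows that `1 - X^x` has weight at least `1 / ord x`, and that
everything of weight above `∑ j, (p ^ e j - 1) / p ^ e j = (1 - 1 / p) K₁*(G)` vanishes. For a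
zero-sum free family the product of the `1 - X^{g i}` is nonzero, since only the empty subfamily
contributes to its coefficient at `0`, so the cross number of the family does not exceed this bound.
-/

/-- `g` restricted to `s` is zero-sum free: no nonempty subfamily indexed inside `s` is zero-sum.
Unlike `IsZeroSumFree`, this speaks about a subfamily without reindexing it. -/
def IsZeroSumFreeOn {ι G : Type*} [AddCommMonoid G] (g : ι → G) (s : Finset ι) : Prop :=
  ∀ J ⊆ s, J.Nonempty → ∑ i ∈ J, g i ≠ 0

section MinimalZeroSum

variable {G : Type*} [AddCommGroup G] {ℓ : ℕ} {g : Fin ℓ → G} {A M : Finset (Fin ℓ)}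

theorem exists_isMinZeroSum_subset (hne : A.Nonempty) (hA : ∑ i ∈ A, g i = 0) :
    ∃ M ⊆ A, IsMinZeroSum g M := by
  obtain ⟨M, hMA, ⟨hM, hM0⟩, hmin⟩ := exists_minimal_le_of_wellFoundedLT
    (fun J : Finset (Fin ℓ) ↦ J.Nonempty ∧ ∑ i ∈ J, g i = 0) A ⟨hne, hA⟩
  exact ⟨M, hMA, hM, hM0, fun J hJ hJne hJ0 ↦ hJ.not_subset (hmin ⟨hJne, hJ0⟩ hJ.subset)⟩

theorem IsMinZeroSum.sum_sdiff_eq_zero (hM : IsMinZeroSum g M) (hMA : M ⊆ A)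
    (hA : ∑ i ∈ A, g i = 0) : ∑ i ∈ A \ M, g i = 0 := by
  rw [sum_sdiff_eq_sub hMA, hA, hM.2.1, sub_zero]

theorem IsMinZeroSum.exists_finpartition_insert (hM : IsMinZeroSum g M) (hMA : M ⊆ A)
    {Q : Finpartition (A \ M)} (hQ : ∀ I ∈ Q.parts, IsMinZeroSum g I) :
    ∃ P : Finpartition A, M ∈ P.parts ∧ ∀ I ∈ P.parts, IsMinZeroSum g I :=
  ⟨Q.extend hM.1.ne_empty sdiff_disjoint (sdiff_union_of_subset hMA), by simp,
    by simpa using ⟨hM, hQ⟩⟩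

theorem exists_finpartition_isMinZeroSum (hA : ∑ i ∈ A, g i = 0) :
    ∃ Q : Finpartition A, ∀ I ∈ Q.parts, IsMinZeroSum g I := by
  induction A using Finset.strongInduction with
  | H A ih =>
    rcases A.eq_empty_or_nonempty with rfl | hne
    · exact ⟨Finpartition.empty _, by simp⟩
    · obtain ⟨M, hMA, hM⟩ := exists_isMinZeroSum_subset hne hA
      obtain ⟨Q, hQ⟩ := ih (A \ M) (sdiff_ssubset hMA hM.1) (hM.sum_sdiff_eq_zero hMA hA)
      obtain ⟨P, -, hP⟩ := hM.exists_finpartition_insert hMA hQ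
      exact ⟨P, hP⟩

variable {P : Finpartition (univ : Finset (Fin ℓ))}

theorem IsFactorization.sum_eq_zero (hP : IsFactorization g P) : ∑ i, g i = 0 := by
  rw [← P.biUnion_parts, sum_biUnion P.disjoint]
  exact Finset.sum_eq_zero fun I hI ↦ (hP I hI).2.1

theorem IsUFIM.mem_parts_of_isMinZeroSum (hg : IsUFIM g) (hP : IsFactorization g P)
    (hM : IsMinZeroSum g M) : M ∈ P.parts := by
  have hM_univ : M ⊆ univ := subset_univ M
  obtain ⟨Q, hQ⟩ :=
    exists_finpartition_isMinZeroSum (hM.sum_sdiff_eq_zero hM_univ hP.sum_eq_zero)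
  obtain ⟨P', hMP', hP'⟩ := hM.exists_finpartition_insert hM_univ hQ
  rwa [hg.2.unique hP hP']

theorem IsUFIM.exists_isZeroSumFreeOn_compl (hg : IsUFIM g) (hP : IsFactorization g P) :
    ∃ R : Finset (Fin ℓ), #R = #P.parts ∧ IsZeroSumFreeOn g Rᶜ := by
  obtain ⟨R, -, hR⟩ := P.exists_subset_part_bijOn
  refine ⟨R, hR.finsetCard_eq P.part, fun J hJ hJne hJ0 ↦ ?_⟩
  obtain ⟨M, hMJ, hM⟩ := exists_isMinZeroSum_subset hJne hJ0
  obtain ⟨i, hiR, rfl⟩ := hR.surjOn (hg.mem_parts_of_isMinZeroSum hP hM)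
  exact mem_compl.1 (hJ (hMJ (P.mem_part (mem_univ i)))) hiR

theorem IsUFIM.crossNum_le_add (hg : IsUFIM g) (hP : IsFactorization g P) {b c : ℝ}
    (hb : ∀ i, 1 / (addOrderOf (g i) : ℝ) ≤ b)
    (hc : ∀ s, IsZeroSumFreeOn g s → ∑ i ∈ s, 1 / (addOrderOf (g i) : ℝ) ≤ c) :
    crossNum g ≤ #P.parts * b + c := by
  obtain ⟨R, hR, hfree⟩ := hg.exists_isZeroSumFreeOn_compl hP
  rw [crossNum, ← sum_add_sum_compl R, ← hR, ← nsmul_eq_mul]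
  exact add_le_add (sum_le_card_nsmul R _ b fun i _ ↦ hb i) (hc _ hfree)

end MinimalZeroSum

section WeightIdeal

variable {A M ι κ : Type*} [CommRing A] [Fintype ι] {y : ι → A} {w : ι → M}

/-- The ideal generated by the monomials in the `y j` of weighted degree at least `d`, where `y j`
has weight `w j`. -/
def weightIdeal [AddCommMonoid M] [LE M] (y : ι → A) (w : ι → M) (d : M) : Ideal A :=
  Ideal.span ((fun a : ι → ℕ ↦ ∏ j, y j ^ a j) '' {a | d ≤ ∑ j, a j • w j})

theorem pow_mem_weightIdeal [AddCommMonoid M] [LE M] {d : M} {n : ℕ} {j : ι}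
    (h : d ≤ n • w j) : y j ^ n ∈ weightIdeal y w d := by
  classical
  refine Ideal.subset_span ⟨Pi.single j n, ?_, ?_⟩
  · simpa [Pi.single_apply, ite_smul] using h
  · simp [Pi.single_apply, pow_ite]

theorem mul_mem_weightIdeal [AddCommMonoid M] [Preorder M] [AddLeftMono M] {c d : M} {x z : A}
    (hx : x ∈ weightIdeal y w c) (hz : z ∈ weightIdeal y w d) :
    x * z ∈ weightIdeal y w (c + d) := by
  have hxz := Ideal.mul_mem_mul hx hz
  rw [weightIdeal, weightIdeal, Ideal.span_mul_span'] at hxz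
  refine Ideal.span_mono ?_ hxz
  rintro _ ⟨_, ⟨a, ha, rfl⟩, _, ⟨b, hb, rfl⟩, rfl⟩
  refine ⟨a + b, ?_, ?_⟩
  · simpa only [Set.mem_ofPred_eq, Pi.add_apply, add_smul, sum_add_distrib] using add_le_add ha hb
  · simp only [Pi.add_apply, pow_add, prod_mul_distrib]

theorem prod_mem_weightIdeal [AddCommMonoid M] [Preorder M] [AddLeftMono M] {s : Finset κ}
    {d : κ → M} {x : κ → A} (h : ∀ i ∈ s, x i ∈ weightIdeal y w (d i)) :
    ∏ i ∈ s, x i ∈ weightIdeal y w (∑ i ∈ s, d i) := by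
  induction s using Finset.cons_induction with
  | empty => exact Ideal.subset_span ⟨0, by simp, by simp⟩
  | cons i s hi ih =>
    rw [prod_cons, sum_cons]
    exact mul_mem_weightIdeal (h i (mem_cons_self i s)) (ih fun j hj ↦ h j (mem_cons_of_mem hj))

theorem weightIdeal_eq_bot [AddCommMonoid M] [LinearOrder M] [AddLeftMono M] {n : ι → ℕ} {d : M}
    (hw : ∀ j, 0 ≤ w j) (hy : ∀ j, y j ^ (n j + 1) = 0) (hd : ∑ j, n j • w j < d) :
    weightIdeal y w d = ⊥ := by
  rw [weightIdeal, Ideal.span_eq_bot]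
  rintro _ ⟨a, ha, rfl⟩
  obtain ⟨j, -, hj⟩ := exists_lt_of_sum_lt (hd.trans_le ha)
  have hnj : n j < a j := lt_of_not_ge fun h ↦ hj.not_ge (nsmul_le_nsmul_left (hw j) h)
  exact prod_eq_zero (mem_univ j) (pow_eq_zero_of_le hnj (hy j))

end WeightIdeal

section GroupAlgebra

open AddMonoidAlgebra (single)

variable {k : Type*} [CommRing k]

/-- The elements `x` of `G` whose image in the group algebra is congruent to `1` modulo `I`. When
`I` is the `n`-th power of the augmentation ideal this is the `n`-th dimension subgroup of `G`. -/
def dimensionSubgroup {G : Type*} [AddCommGroup G] (I : Ideal (AddMonoidAlgebra k G)) :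
    AddSubgroup G where
  carrier := {x | 1 - single x 1 ∈ I}
  zero_mem' := by simp [AddMonoidAlgebra.one_def]
  add_mem' {x y} hx hy := by
    have h : (1 - single (x + y) 1 : AddMonoidAlgebra k G) =
        (1 - single x 1) + single x 1 * (1 - single y 1) := by
      rw [mul_sub, mul_one, AddMonoidAlgebra.single_mul_single, mul_one]; ring
    rw [Set.mem_ofPred_eq, h]
    exact I.add_mem hx (I.mul_mem_left _ hy)
  neg_mem' {x} hx := by
    have h : (1 - single (-x) 1 : AddMonoidAlgebra k G) = -single (-x) 1 * (1 - single x 1) := by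
      rw [neg_mul, mul_sub, mul_one, AddMonoidAlgebra.single_mul_single, neg_add_cancel, mul_one,
        ← AddMonoidAlgebra.one_def, neg_sub]
    rw [Set.mem_ofPred_eq, h]
    exact I.mul_mem_left _ hx

theorem mem_dimensionSubgroup {G : Type*} [AddCommGroup G] {I : Ideal (AddMonoidAlgebra k G)}
    {x : G} : x ∈ dimensionSubgroup I ↔ 1 - single x 1 ∈ I :=
  Iff.rfl

theorem IsZeroSumFreeOn.prod_one_sub_single_ne_zero [Nontrivial k] {ι G : Type*} [AddCommMonoid G]
    {g : ι → G} {s : Finset ι} (h : IsZeroSumFreeOn g s) :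
    ∏ i ∈ s, (1 - single (g i) (1 : k)) ≠ 0 := by
  classical
  have hexpand : ∏ i ∈ s, (1 - single (g i) (1 : k)) =
      ∑ J ∈ s.powerset, single (∑ i ∈ J, g i) ((-1) ^ #J) := by
    simp only [sub_eq_add_neg, ← AddMonoidAlgebra.single_neg, prod_one_add,
      AddMonoidAlgebra.prod_single, prod_const]
  have hcoeff : (∏ i ∈ s, (1 - single (g i) (1 : k))).coeff 0 = 1 := by
    rw [hexpand, AddMonoidAlgebra.coeff_sum, Finsupp.finsetSum_apply, sum_eq_single ∅]
    · simp
    · intro J hJ hJne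
      rw [AddMonoidAlgebra.coeff_single, Finsupp.single_eq_of_ne']
      exact h J (mem_powerset.1 hJ) (nonempty_iff_ne_empty.2 hJne)
    · simp
  intro h0
  simp [h0] at hcoeff

theorem one_sub_single_pow_prime_pow {G : Type*} [AddCommMonoid G] {p : ℕ} [Fact p.Prime]
    [CharP k p] (n : ℕ) (x : G) :
    (1 - single x (1 : k)) ^ p ^ n = 1 - single (p ^ n • x) 1 := by
  have : CharP (AddMonoidAlgebra k G) p :=
    charP_of_injective_algebraMap (FaithfulSMul.algebraMap_injective k _) p
  rw [sub_pow_char_pow, one_pow, AddMonoidAlgebra.single_pow, one_pow]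

end GroupAlgebra

section PGroup

open AddMonoidAlgebra (single)

theorem exists_nsmul_eq_of_pow_nsmul_eq_zero {p : ℕ} [NeZero p] {m n : ℕ} {x : ZMod (p ^ m)}
    (hx : p ^ n • x = 0) : ∃ c : ℕ, c • (p ^ (m - n) • 1) = x := by
  have hdvd : p ^ m ∣ p ^ n * x.val := by
    rw [← ZMod.natCast_eq_zero_iff, Nat.cast_mul, ZMod.natCast_zmod_val, ← nsmul_eq_mul, hx]
  obtain ⟨c, hc⟩ : p ^ (m - n) ∣ x.val := by
    rcases le_total m n with h | h
    · simp [Nat.sub_eq_zero_of_le h]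
    · exact Nat.dvd_of_mul_dvd_mul_left (NeZero.pos _) ((pow_mul_pow_sub p h).dvd.trans hdvd)
  exact ⟨c, by rw [← mul_smul, mul_comm, ← hc, nsmul_one, ZMod.natCast_zmod_val]⟩

variable {ι : Type*} {p : ℕ} {e : ι → ℕ}

section Finite

variable [Finite ι]

theorem exists_addOrderOf_eq_prime_pow (hp : p.Prime) (x : ∀ j, ZMod (p ^ e j)) :
    ∃ n, addOrderOf x = p ^ n := by
  cases nonempty_fintype ι
  have hcard : Nat.card (∀ j, ZMod (p ^ e j)) = p ^ ∑ j, e j := by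
    simp only [Nat.card_pi, Nat.card_zmod, prod_pow_eq_pow_sum]
  obtain ⟨n, -, hn⟩ := (Nat.dvd_prime_pow hp).1 (hcard ▸ addOrderOf_dvd_natCard x)
  exact ⟨n, hn⟩

theorem prime_le_addOrderOf (hp : p.Prime) {x : ∀ j, ZMod (p ^ e j)} (hx : x ≠ 0) :
    p ≤ addOrderOf x := by
  obtain ⟨n, hn⟩ := exists_addOrderOf_eq_prime_pow hp x
  have hn0 : n ≠ 0 := by
    rintro rfl
    exact hx (AddMonoid.addOrderOf_eq_one_iff.1 hn)
  exact hn ▸ Nat.le_self_pow hn0 p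

end Finite

variable {k : Type*} [CommRing k] [Fintype ι]

variable (p e k) in
/-- The filtration of the group algebra of `⨁ j, C_{p ^ e j}` in which `1 - X^{b j}`, for `b j` the
generator of the `j`-th summand, has weight `1 / p ^ e j`. With these weights `1 - X^x` has weight
at least `1 / addOrderOf x`. -/
noncomputable def orderFiltration [DecidableEq ι] (d : ℝ) :
    Ideal (AddMonoidAlgebra k (∀ j, ZMod (p ^ e j))) :=
  weightIdeal (fun j ↦ 1 - single (Pi.single j 1) 1) (fun j ↦ 1 / (p : ℝ) ^ e j) d

theorem orderFiltration_eq_bot [DecidableEq ι] [Fact p.Prime] [CharP k p] {d : ℝ}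
    (hd : ∑ j, ((p : ℝ) ^ e j - 1) / (p : ℝ) ^ e j < d) : orderFiltration p e k d = ⊥ := by
  refine weightIdeal_eq_bot (n := fun j ↦ p ^ e j - 1) (fun j ↦ by positivity) (fun j ↦ ?_) ?_
  · rw [Nat.sub_add_cancel NeZero.one_le, one_sub_single_pow_prime_pow, ← Pi.single_smul]
    simp [AddMonoidAlgebra.one_def]
  · simpa [NeZero.pos, div_eq_mul_inv] using hd

theorem one_sub_single_mem_orderFiltration [DecidableEq ι] [Fact p.Prime] [CharP k p]
    (x : ∀ j, ZMod (p ^ e j)) :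
    1 - single x 1 ∈ orderFiltration p e k (1 / (addOrderOf x : ℝ)) := by
  have hp : p.Prime := Fact.out
  obtain ⟨n, hn⟩ := exists_addOrderOf_eq_prime_pow hp x
  have hx : p ^ n • x = 0 := hn ▸ addOrderOf_nsmul_eq_zero x
  rw [hn, ← mem_dimensionSubgroup, ← univ_sum_single x]
  refine sum_mem fun j _ ↦ ?_
  obtain ⟨c, hc⟩ := exists_nsmul_eq_of_pow_nsmul_eq_zero (congrFun hx j)
  rw [← hc, Pi.single_smul, Pi.single_smul]
  refine nsmul_mem ?_ c
  rw [mem_dimensionSubgroup, ← one_sub_single_pow_prime_pow]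
  have hweight : 1 / ((p ^ n : ℕ) : ℝ) ≤ p ^ (e j - n) • (1 / (p : ℝ) ^ e j) := by
    have hp0 : (0 : ℝ) < p := mod_cast hp.pos
    rw [nsmul_eq_mul, mul_one_div, Nat.cast_pow, Nat.cast_pow,
      div_le_div_iff₀ (by positivity) (by positivity), one_mul, ← pow_add]
    exact pow_le_pow_right₀ (mod_cast hp.one_le) le_tsub_add
  exact pow_mem_weightIdeal hweight

theorem IsZeroSumFreeOn.sum_one_div_addOrderOf_le {κ : Type*} (hp : p.Prime)
    {g : κ → ∀ j, ZMod (p ^ e j)} {s : Finset κ} (h : IsZeroSumFreeOn g s) :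
    ∑ i ∈ s, 1 / (addOrderOf (g i) : ℝ) ≤ ∑ j, ((p : ℝ) ^ e j - 1) / (p : ℝ) ^ e j := by
  classical
  have : Fact p.Prime := ⟨hp⟩
  by_contra! hlt
  have hmem : ∏ i ∈ s, (1 - single (g i) 1) ∈ orderFiltration p e (ZMod p)
      (∑ i ∈ s, 1 / (addOrderOf (g i) : ℝ)) :=
    prod_mem_weightIdeal fun i _ ↦ one_sub_single_mem_orderFiltration (g i)
  rw [orderFiltration_eq_bot hlt, Ideal.mem_bot] at hmem
  exact h.prod_one_sub_single_ne_zero hmem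

end PGroup

theorem pow_sub_one_div_pow_eq {K : Type*} [Field K] {q : K} (hq : q ≠ 0) (hq1 : q ≠ 1) {n : ℕ}
    (hn : 1 ≤ n) :
    (q ^ n - 1) / q ^ n = (1 - 1 / q) * ((q ^ n - 1) / (q ^ n - q ^ (n - 1))) := by
  obtain ⟨n, rfl⟩ := Nat.exists_eq_add_of_le' hn
  have hsub : q ^ (n + 1) - q ^ n = q ^ n * (q - 1) := by ring
  have : q - 1 ≠ 0 := sub_ne_zero.2 hq1
  rw [Nat.add_sub_cancel, hsub]
  field_simp
  ring

theorem crossNum_le_of_few_factors_pgroup_general {ι : Type*} [Fintype ι] {p : ℕ} (hp : p.Prime)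
    {e : ι → ℕ} (he : ∀ j, 1 ≤ e j) {ℓ : ℕ} {g : Fin ℓ → ∀ j, ZMod (p ^ e j)} (hg : IsUFIM g)
    {P : Finpartition (univ : Finset (Fin ℓ))} (hP : IsFactorization g P) :
    crossNum g ≤ #P.parts / p +
      (1 - 1 / p) * ∑ j, ((p : ℝ) ^ e j - 1) / ((p : ℝ) ^ e j - (p : ℝ) ^ (e j - 1)) := by
  have hp0 : (0 : ℝ) < p := mod_cast hp.pos
  have hp1 : (p : ℝ) ≠ 1 := mod_cast hp.ne_one
  have horder (i : Fin ℓ) : 1 / (addOrderOf (g i) : ℝ) ≤ 1 / p :=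
    one_div_le_one_div_of_le hp0 (mod_cast prime_le_addOrderOf hp (hg.1 i))
  calc
    crossNum g ≤ #P.parts * (1 / p) + ∑ j, ((p : ℝ) ^ e j - 1) / (p : ℝ) ^ e j :=
      hg.crossNum_le_add hP horder fun _ hs ↦ hs.sum_one_div_addOrderOf_le hp
    _ = _ := by
      rw [mul_one_div, mul_sum]
      exact congrArg _ (sum_congr rfl fun j _ ↦ pow_sub_one_div_pow_eq hp0.ne' hp1 (he j))

/-- Proposition: for a nontrivial finite abelian `p`-group `G = ⊕_{j} C_{p^{e_j}}`, if a
UFIM `S` over `G∖{0}` has an irreducible factorization with `m ≤ K₁*(G)` parts, then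
`k(S) ≤ K₁*(G)`, where `K₁*(G) = Σ_j (p^{e_j} − 1)/(p^{e_j} − p^{e_j−1})`. -/
theorem crossNum_le_of_few_factors_pgroup (p : ℕ) (hp : p.Prime)
    (t : ℕ) (ht : 1 ≤ t) (e : Fin t → ℕ) (he : ∀ j, 1 ≤ e j)
    {ℓ : ℕ} (g : Fin ℓ → (∀ j : Fin t, ZMod (p ^ e j))) (hg : IsUFIM g)
    (P : Finpartition (Finset.univ : Finset (Fin ℓ))) (hP : IsFactorization g P)
    (hm : (P.parts.card : ℝ) ≤
      ∑ j, ((p : ℝ) ^ e j - 1) / ((p : ℝ) ^ e j - (p : ℝ) ^ (e j - 1))) :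
    crossNum g ≤ ∑ j, ((p : ℝ) ^ e j - 1) / ((p : ℝ) ^ e j - (p : ℝ) ^ (e j - 1)) := by
  have hdiv := div_le_div_of_nonneg_right hm p.cast_nonneg
  linear_combination crossNum_le_of_few_factors_pgroup_general hp he hg hP + hdiv
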